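/- Casimir product identity in U_q(sl_2) (identity (e-id)): The element C is central in the unital subalgebra generated by E, F, K, K⁻¹; one has C = FE + (qK + q⁻¹K⁻¹)/(q − q⁻¹)²; and for every j ≥ 0: EʲFʲ = ∏_{i=0}^{j−1} ( C − (q^{2i+1}K⁻¹ + q^{−2i−1}K)/(q − q⁻¹)² ), where the factors commute pairwise (so the product is unambiguous). -/

import Mathlib

noncomputable section
namespace Dyn

/-- **Casimir product identity in U_q(sl₂)** (identity (e-id)): the Casimir element
C = EF + (q⁻¹K + qK⁻¹)/(q−q⁻¹)² commutes with E, F, K, K⁻¹ (hence is central in the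
subalgebra they generate), equals FE + (qK + q⁻¹K⁻¹)/(q−q⁻¹)², and
E^j F^j = ∏_{i=0}^{j−1} (C − (q^{2i+1}K⁻¹ + q^{−2i−1}K)/(q−q⁻¹)²), the factors of the
product commuting pairwise. -/
theorem casimir_product_identity
    (q : ℂ) (hq0 : q ≠ 0) (hq2 : q ^ 2 ≠ 1)
    (R : Type*) [Ring R] [Algebra ℂ R] (E F K Kinv : R)
    (hK : K * Kinv = 1) (hK' : Kinv * K = 1)
    (hKE : K * E * Kinv = (q ^ 2) • E)
    (hKF : K * F * Kinv = (q ^ (-2 : ℤ)) • F)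
    (hEF : E * F - F * E = (q - q⁻¹)⁻¹ • (K - Kinv)) :
    let C : R := E * F + (q⁻¹ / (q - q⁻¹) ^ 2) • K + (q / (q - q⁻¹) ^ 2) • Kinv
    let D : ℕ → R := fun i =>
      (q ^ (2 * (i : ℤ) + 1) / (q - q⁻¹) ^ 2) • Kinv +
        (q ^ (-(2 * (i : ℤ)) - 1) / (q - q⁻¹) ^ 2) • K
    (∀ x ∈ Algebra.adjoin ℂ ({E, F, K, Kinv} : Set R), C * x = x * C) ∧
    C = F * E + (q / (q - q⁻¹) ^ 2) • K + (q⁻¹ / (q - q⁻¹) ^ 2) • Kinv ∧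
    (∀ j : ℕ, E ^ j * F ^ j = ((List.range j).map (fun i => C - D i)).prod) ∧
    (∀ i i' : ℕ, (C - D i) * (C - D i') = (C - D i') * (C - D i)) := by
  intro C D
  have hd : q - q⁻¹ ≠ 0 := by
    intro h
    apply hq2
    have h1 : q = q⁻¹ := sub_eq_zero.mp h
    calc q ^ 2 = q * q := sq q
      _ = q * q⁻¹ := by rw [← h1]
      _ = 1 := mul_inv_cancel₀ hq0
  have hz : q ^ (-2 : ℤ) = (q ^ 2)⁻¹ := by
    rw [zpow_neg]; norm_cast
  have hq2' : q ^ 2 ≠ 0 := pow_ne_zero 2 hq0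
  rw [hz] at hKF
  -- commutation relations
  have kx : ∀ (c : ℂ) (x : R), K * x * Kinv = c • x → K * x = c • (x * K) := by
    intro c x h
    rw [← smul_mul_assoc, ← h, mul_assoc, hK', mul_one]
  have kix : ∀ (c : ℂ) (x : R), c ≠ 0 → K * x * Kinv = c • x →
      Kinv * x = c⁻¹ • (x * Kinv) := by
    intro c x hc h
    have h1 : x * Kinv = c • (Kinv * x) := by
      rw [← mul_smul_comm, ← h, mul_assoc K, ← mul_assoc Kinv, hK', one_mul]
    rw [h1, smul_smul, inv_mul_cancel₀ hc, one_smul]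
  have KE := kx _ _ hKE
  have KF := kx _ _ hKF
  have IE := kix _ _ hq2' hKE
  have IF := kix _ _ (inv_ne_zero hq2') hKF
  rw [inv_inv] at IF
  have hC2 : C = F * E + (q / (q - q⁻¹) ^ 2) • K + (q⁻¹ / (q - q⁻¹) ^ 2) • Kinv := by
    have h1 : E * F = F * E + (q - q⁻¹)⁻¹ • (K - Kinv) := by rw [← hEF]; abel
    have h2 : (q - q⁻¹)⁻¹ = q / (q - q⁻¹) ^ 2 - q⁻¹ / (q - q⁻¹) ^ 2 := by
      rw [← sub_div, sq, div_mul_cancel_left₀ hd]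
    simp only [C]
    rw [h1, h2]
    module
  have hs1 : q⁻¹ / (q - q⁻¹) ^ 2 * q ^ 2 = q / (q - q⁻¹) ^ 2 := by
    rw [div_mul_eq_mul_div]; congr 1; field_simp
  have hs2 : q / (q - q⁻¹) ^ 2 * (q ^ 2)⁻¹ = q⁻¹ / (q - q⁻¹) ^ 2 := by
    rw [div_mul_eq_mul_div]; congr 1; field_simp
  have cE : C * E = E * C := by
    conv_rhs => rw [hC2]
    simp only [C, add_mul, mul_add, smul_mul_assoc, mul_smul_comm, KE, IE, smul_smul, hs1, hs2,
      mul_assoc]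
  have cF : C * F = F * C := by
    conv_lhs => rw [hC2]
    simp only [C, add_mul, mul_add, smul_mul_assoc, mul_smul_comm, KF, IF, smul_smul, hs1, hs2,
      mul_assoc]
  have kEF : K * (E * F) = E * F * K := by
    rw [← mul_assoc, KE, smul_mul_assoc, mul_assoc, KF, mul_smul_comm, smul_smul,
      mul_inv_cancel₀ hq2', one_smul, mul_assoc]
  have iEF : Kinv * (E * F) = E * F * Kinv := by
    rw [← mul_assoc, IE, smul_mul_assoc, mul_assoc, IF, mul_smul_comm, smul_smul,
      inv_mul_cancel₀ hq2', one_smul, mul_assoc]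
  have cK : C * K = K * C := by
    simp only [C, add_mul, mul_add, smul_mul_assoc, mul_smul_comm, kEF, hK, hK']
  have cI : C * Kinv = Kinv * C := by
    simp only [C, add_mul, mul_add, smul_mul_assoc, mul_smul_comm, iEF, hK, hK']
  have cD : ∀ i, C * D i = D i * C := by
    intro i
    simp only [D, add_mul, mul_add, smul_mul_assoc, mul_smul_comm, cK, cI]
  have DD : ∀ i i', D i * D i' = D i' * D i := by
    intro i i'
    simp only [D, add_mul, mul_add, smul_mul_assoc, mul_smul_comm, hK, hK']
    module
  have h0 : E * F = C - D 0 := by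
    simp only [C, D]
    simp
    abel
  have DF1 : ∀ i, D i * F = F * D (i + 1) := by
    intro i
    have e1 : q ^ (2 * ((i + 1 : ℕ) : ℤ) + 1) = q ^ (2 * (i : ℤ) + 1) * q ^ 2 := by
      rw [← zpow_natCast q 2, ← zpow_add₀ hq0]; congr 1
    have e2 : q ^ (-(2 * ((i + 1 : ℕ) : ℤ)) - 1) = q ^ (-(2 * (i : ℤ)) - 1) * (q ^ 2)⁻¹ := by
      rw [← hz, ← zpow_add₀ hq0]; congr 1; push_cast; ring
    simp only [D, e1, e2, add_mul, mul_add, smul_mul_assoc, mul_smul_comm, KF, IF, smul_smul,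
      div_mul_eq_mul_div]
  have DF : ∀ j i, D i * F ^ j = F ^ j * D (i + j) := by
    intro j
    induction j with
    | zero => intro i; simp
    | succ j ih =>
      intro i
      rw [pow_succ, ← mul_assoc, ih, mul_assoc, DF1, ← mul_assoc, add_assoc]
  have cFj : ∀ j : ℕ, C * F ^ j = F ^ j * C := fun j => (show Commute C F from cF).pow_right j
  refine ⟨?_, hC2, ?_, ?_⟩
  · intro x hx
    induction hx using Algebra.adjoin_induction with
    | mem x hx =>
      rcases hx with rfl | rfl | rfl | rfl
      exacts [cE, cF, cK, cI]
    | algebraMap r => exact (Algebra.commutes r C).symm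
    | add x y _ _ hx hy => rw [mul_add, hx, hy, ← add_mul]
    | mul x y _ _ hx hy => rw [← mul_assoc, hx, mul_assoc, hy, mul_assoc]
  · intro j
    induction j with
    | zero => simp
    | succ j ih =>
      rw [List.range_succ, List.map_append, List.prod_append, ← ih, List.map_singleton,
        List.prod_singleton, pow_succ, pow_succ', mul_assoc, ← mul_assoc E, h0, sub_mul, cFj, DF,
        zero_add, ← mul_sub, mul_assoc]
  · intro i i'
    simp only [sub_mul, mul_sub, cD, DD i i']
    abel

end Dyn
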